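/- arXiv:1103.5247 — 3 statements merged into one kernel-verified Lean document; each statement's English description precedes it below -/
import Mathlib

section
/- Let f : ℝ → ℝ be strictly positive and integrable with ∫ v² f dv finite, ρ_f > 0 and T_f > 0, and suppose (M[f] − f) log f and (M[f] − f) log M[f] are integrable. Then the entropy production of the relaxation operator is nonpositive: ∫_ℝ (M[f](v) − f(v)) log f(v) dv ≤ 0. -/
/-!
Write `M = M[f]`. The logarithm is increasing, so `(M - f) (log f - log M) ≤ 0` pointwise, and
therefore `∫ (M - f) log f ≤ ∫ (M - f) log M`. The right-hand side vanishes: `log M` is an affine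
function of `(v - u_f)²`, and `M` and `f` have the same mass and the same second moment about
`u_f`. These two moments of `M` are `integral_maxwellian` and `integral_sq_mul_maxwellian`; they
are read off from Mathlib's Gaussian distribution with mean `u` and variance `R T`.
-/

open MeasureTheory Real

/-- The one-dimensional Maxwellian `M(v; ρ, u, T) = (ρ/√(2πRT)) exp(−(v−u)²/(2RT))`. -/
noncomputable def maxwellian (R ρ u T v : ℝ) : ℝ :=
  ρ / Real.sqrt (2 * Real.pi * R * T) * Real.exp (-(v - u) ^ 2 / (2 * R * T))

/-- The density `ρ_f = ∫ f dv`. -/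
noncomputable def momDensity (f : ℝ → ℝ) : ℝ := ∫ v : ℝ, f v

/-- The mean velocity `u_f = ρ_f⁻¹ ∫ v f dv`. -/
noncomputable def momVelocity (f : ℝ → ℝ) : ℝ := (momDensity f)⁻¹ * ∫ v : ℝ, v * f v

/-- The temperature `T_f`, defined by `ρ_f R T_f = ∫ (v − u_f)² f dv`. -/
noncomputable def momTemperature (R : ℝ) (f : ℝ → ℝ) : ℝ :=
  (∫ v : ℝ, (v - momVelocity f) ^ 2 * f v) / (momDensity f * R)

/-- The local Maxwellian `M[f]` built from the moments of `f`. -/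
noncomputable def maxwellianOf (R : ℝ) (f : ℝ → ℝ) : ℝ → ℝ :=
  fun v => maxwellian R (momDensity f) (momVelocity f) (momTemperature R f) v

lemma maxwellian_eq_gaussianPDFReal {R T : ℝ} (hR : 0 < R) (hT : 0 < T) (ρ u v : ℝ) :
    maxwellian R ρ u T v =
      ρ * ProbabilityTheory.gaussianPDFReal u (R * T).toNNReal v := by
  simp only [maxwellian, ProbabilityTheory.gaussianPDFReal, div_eq_mul_inv,
    Real.coe_toNNReal _ (mul_pos hR hT).le]
  simp only [mul_assoc]

lemma maxwellian_pos {R ρ T : ℝ} (hR : 0 < R) (hρ : 0 < ρ) (hT : 0 < T) (u v : ℝ) :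
    0 < maxwellian R ρ u T v := by
  unfold maxwellian
  positivity

lemma log_maxwellian {R ρ T : ℝ} (hR : 0 < R) (hρ : 0 < ρ) (hT : 0 < T) (u v : ℝ) :
    Real.log (maxwellian R ρ u T v) =
      Real.log (ρ / Real.sqrt (2 * Real.pi * R * T)) - (v - u) ^ 2 / (2 * R * T) := by
  unfold maxwellian
  rw [Real.log_mul (by positivity) (by positivity), Real.log_exp]
  ring

lemma integrable_maxwellian {R T : ℝ} (hR : 0 < R) (hT : 0 < T) (ρ u : ℝ) :
    Integrable (maxwellian R ρ u T) := by
  rw [funext (maxwellian_eq_gaussianPDFReal hR hT ρ u)]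
  exact (ProbabilityTheory.integrable_gaussianPDFReal _ _).const_mul ρ

lemma integral_maxwellian {R T : ℝ} (hR : 0 < R) (hT : 0 < T) (ρ u : ℝ) :
    ∫ v, maxwellian R ρ u T v = ρ := by
  have hw : (R * T).toNNReal ≠ 0 := (Real.toNNReal_pos.mpr (mul_pos hR hT)).ne'
  simp only [maxwellian_eq_gaussianPDFReal hR hT]
  rw [integral_const_mul, ProbabilityTheory.integral_gaussianPDFReal_eq_one u hw, mul_one]

lemma integral_sq_mul_maxwellian {R T : ℝ} (hR : 0 < R) (hT : 0 < T) (ρ u : ℝ) :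
    ∫ v, (v - u) ^ 2 * maxwellian R ρ u T v = ρ * (R * T) := by
  have hw : (R * T).toNNReal ≠ 0 := (Real.toNNReal_pos.mpr (mul_pos hR hT)).ne'
  have hvar := ProbabilityTheory.variance_fun_id_gaussianReal (μ := u)
    (v := (R * T).toNNReal)
  rw [ProbabilityTheory.variance_eq_integral measurable_id'.aemeasurable,
    ProbabilityTheory.integral_id_gaussianReal,
    ProbabilityTheory.integral_gaussianReal_eq_integral_smul hw] at hvar
  simp only [smul_eq_mul, Real.coe_toNNReal _ (mul_pos hR hT).le] at hvar
  rw [← hvar, ← integral_const_mul]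
  congr 1 with v
  rw [maxwellian_eq_gaussianPDFReal hR hT]
  ring

/-- Entropy production of the BGK relaxation operator is nonpositive:
for strictly positive `f`, `∫ (M[f] − f) log f dv ≤ 0`. -/
theorem relaxation_entropy_production_nonpos (R : ℝ) (hR : 0 < R) (f : ℝ → ℝ)
    (hpos : ∀ v, 0 < f v) (hint : Integrable f)
    (hint2 : Integrable (fun v => v ^ 2 * f v))
    (hρ : 0 < momDensity f) (hT : 0 < momTemperature R f)
    (hlogf : Integrable (fun v => (maxwellianOf R f v - f v) * Real.log (f v)))
    (hlogM : Integrable (fun v => (maxwellianOf R f v - f v) * Real.log (maxwellianOf R f v))) :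
    (∫ v : ℝ, (maxwellianOf R f v - f v) * Real.log (f v)) ≤ 0 := by
  set ρ := momDensity f with hρdef
  set u := momVelocity f with hudef
  set T := momTemperature R f with hTdef
  set c := Real.log (ρ / Real.sqrt (2 * Real.pi * R * T)) with hc
  have hM : maxwellianOf R f = maxwellian R ρ u T := rfl
  rw [hM] at hlogf hlogM ⊢
  have hmom : ∫ v, (v - u) ^ 2 * f v = ρ * (R * T) := by
    rw [hTdef, momTemperature, ← hρdef, ← hudef]
    field_simp
  -- Both second moments are nonzero, whereas the integral of a non-integrable function is `0`.
  have hI1 : Integrable (fun v => (v - u) ^ 2 * f v) := by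
    by_contra h
    rw [integral_undef h] at hmom
    exact (by positivity : ρ * (R * T) ≠ 0) hmom.symm
  have hmomM := integral_sq_mul_maxwellian hR hT ρ u
  have hI2 : Integrable (fun v => (v - u) ^ 2 * maxwellian R ρ u T v) := by
    by_contra h
    rw [integral_undef h] at hmomM
    exact (by positivity : ρ * (R * T) ≠ 0) hmomM.symm
  have hIM := integrable_maxwellian hR hT ρ u
  have hzero : ∫ v, (maxwellian R ρ u T v - f v) * Real.log (maxwellian R ρ u T v) = 0 := by
    have hexp : ∀ v, (maxwellian R ρ u T v - f v) * Real.log (maxwellian R ρ u T v) =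
        c * (maxwellian R ρ u T v - f v) -
          (2 * R * T)⁻¹ * ((v - u) ^ 2 * maxwellian R ρ u T v - (v - u) ^ 2 * f v) := by
      intro v
      rw [log_maxwellian hR hρ hT, ← hc]
      ring
    simp only [hexp]
    have hJ1 : Integrable fun v => c * (maxwellian R ρ u T v - f v) :=
      (hIM.sub hint).const_mul c
    have hJ2 : Integrable fun v => (2 * R * T)⁻¹ *
        ((v - u) ^ 2 * maxwellian R ρ u T v - (v - u) ^ 2 * f v) :=
      (hI2.sub hI1).const_mul _
    rw [integral_sub hJ1 hJ2,
      integral_const_mul, integral_const_mul, integral_sub hIM hint, integral_sub hI2 hI1,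
      integral_maxwellian hR hT, hmom, hmomM, hρdef, momDensity]
    ring
  rw [← hzero]
  refine integral_mono hlogf hlogM fun v => ?_
  have hMv := maxwellian_pos hR hρ hT u v
  rcases le_total (f v) (maxwellian R ρ u T v) with h | h
  · exact mul_le_mul_of_nonneg_left (Real.log_le_log (hpos v) h) (sub_nonneg.mpr h)
  · exact mul_le_mul_of_nonpos_left (Real.log_le_log hMv h) (sub_nonpos.mpr h)
end

section
/- Let τ > 0, Δt > 0, and let f̃ : ℝ → ℝ be nonnegative and integrable with ∫ v² f̃ dv finite, ρ_{f̃} > 0 and T_{f̃} > 0. Define f := (τ f̃ + Δt M[f̃])/(τ + Δt). Then: (i) f is nonnegative, integrable with finite second moment, and has the same moments as f̃ (ρ_f = ρ_{f̃}, u_f = u_{f̃}, T_f = T_{f̃}), so that M[f] = M[f̃]; (ii) f solves the implicit Euler relaxation step f = f̃ + (Δt/τ)(M[f] − f); and (iii) f is the unique nonnegative integrable solution of this implicit equation having finite second moment, positive density and positive temperature. -/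
/-!
The Maxwellian `M[g]` has the same density, first moment and second moment as `g`
(`raw_moments` and `maxwellian_moments`, the latter from the mean and variance of a Gaussian
law). The map from `g` to its moments is linear, so every affine combination
`a g + b M[g]` with `a + b = 1` again has the density, velocity and temperature of `g`; this is
`affine_moments`, on which everything rests.

For `a = τ/(τ+Δt)`, `b = Δt/(τ+Δt)` it gives `M[f] = M[f̃]`, and the implicit equation becomes
an algebraic identity. Conversely, if `g` solves the implicit equation, then
`f̃ = ((τ+Δt)/τ) g - (Δt/τ) M[g]` is also an affine combination with weights of sum `1`, so
`M[g] = M[f̃]`, and the equation, now linear in `g`, determines `g = f`.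
-/

open MeasureTheory Real

open ProbabilityTheory

theorem integrable_first_moment {f : ℝ → ℝ} (h0 : Integrable f)
    (h2 : Integrable (fun v => v ^ 2 * f v)) : Integrable (fun v => v * f v) := by
  refine (h0.norm.add h2.norm).mono'
    (measurable_id.aestronglyMeasurable.mul h0.aestronglyMeasurable) ?_
  refine Filter.Eventually.of_forall fun v => ?_
  simp only [Pi.add_apply, norm_mul, Real.norm_eq_abs, abs_pow]
  nlinarith [mul_nonneg (sq_nonneg (|v| - 1)) (abs_nonneg (f v)), abs_nonneg (f v),
    mul_nonneg (sq_nonneg (|v|)) (abs_nonneg (f v))]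

/-- Expansion of the centred second moment, for an arbitrary centre `c`. -/
theorem integral_centred {f : ℝ → ℝ} (h0 : Integrable f)
    (h2 : Integrable (fun v => v ^ 2 * f v)) (c : ℝ) :
    ∫ v, (v - c) ^ 2 * f v
      = (∫ v, v ^ 2 * f v) - 2 * c * (∫ v, v * f v) + c ^ 2 * ∫ v, f v := by
  have h1 := integrable_first_moment h0 h2
  have hsub : Integrable (fun v => v ^ 2 * f v - 2 * c * (v * f v)) :=
    h2.sub (h1.const_mul _)
  rw [← integral_const_mul, ← integral_const_mul,
    ← integral_sub h2 (h1.const_mul _), ← integral_add hsub (h0.const_mul _)]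
  congr 1
  ext v
  ring

/-- The raw first and second moments in terms of density, velocity and temperature. -/
theorem raw_moments {R : ℝ} (hR : 0 < R) {f : ℝ → ℝ} (h0 : Integrable f)
    (h2 : Integrable (fun v => v ^ 2 * f v)) (hρ : 0 < momDensity f) :
    (∫ v, v * f v) = momDensity f * momVelocity f ∧
    (∫ v, v ^ 2 * f v)
      = momDensity f * (momVelocity f ^ 2 + R * momTemperature R f) := by
  have e1 : (∫ v, v * f v) = momDensity f * momVelocity f := by
    unfold momVelocity
    field_simp
  refine ⟨e1, ?_⟩
  have hc : (∫ v, (v - momVelocity f) ^ 2 * f v)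
      = momDensity f * R * momTemperature R f := by
    unfold momTemperature
    field_simp
  rw [integral_centred h0 h2, e1] at hc
  change _ - _ + _ * momDensity f = _ at hc
  linarith

/-- Equal raw moments of order 0, 1, 2 give equal density, velocity and temperature. -/
theorem moments_congr (R : ℝ) {f g : ℝ → ℝ} (hf0 : Integrable f)
    (hf2 : Integrable (fun v => v ^ 2 * f v)) (hg0 : Integrable g)
    (hg2 : Integrable (fun v => v ^ 2 * g v))
    (e0 : ∫ v, f v = ∫ v, g v) (e1 : ∫ v, v * f v = ∫ v, v * g v)
    (e2 : ∫ v, v ^ 2 * f v = ∫ v, v ^ 2 * g v) :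
    momDensity f = momDensity g ∧ momVelocity f = momVelocity g ∧
      momTemperature R f = momTemperature R g := by
  have d : momDensity f = momDensity g := e0
  have u : momVelocity f = momVelocity g := by
    unfold momVelocity
    rw [d, e1]
  refine ⟨d, u, ?_⟩
  unfold momTemperature
  rw [integral_centred hf0 hf2, integral_centred hg0 hg2, d, u, e0, e1, e2]

/-- A Maxwellian is `ρ` times the density of the Gaussian law of mean `u` and variance `RT`. -/
theorem maxwellian_eq {R T : ℝ} (hR : 0 < R) (hT : 0 < T) (ρ u v : ℝ) :
    maxwellian R ρ u T v = ρ * gaussianPDFReal u (R * T).toNNReal v := by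
  have h : 0 ≤ R * T := by positivity
  simp only [maxwellian, gaussianPDFReal, Real.coe_toNNReal _ h, ← mul_assoc]
  rfl

theorem maxwellian_moments {R T : ℝ} (hR : 0 < R) (hT : 0 < T) (ρ u : ℝ) :
    Integrable (maxwellian R ρ u T) ∧
    Integrable (fun v => v ^ 2 * maxwellian R ρ u T v) ∧
    (∫ v, maxwellian R ρ u T v) = ρ ∧
    (∫ v, v * maxwellian R ρ u T v) = ρ * u ∧
    (∫ v, v ^ 2 * maxwellian R ρ u T v) = ρ * (u ^ 2 + R * T) := by
  have hM : maxwellian R ρ u T = fun v => ρ * gaussianPDFReal u (R * T).toNNReal v :=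
    funext (maxwellian_eq hR hT ρ u)
  have hRT : 0 < R * T := by positivity
  have hs : (R * T).toNNReal ≠ 0 := (Real.toNNReal_pos.2 hRT).ne'
  have hcoe : ((R * T).toNNReal : ℝ) = R * T := Real.coe_toNNReal _ hRT.le
  rw [hM]
  generalize (R * T).toNNReal = s at hs hcoe
  have hL2 : MemLp (id : ℝ → ℝ) 2 (gaussianReal u s) := memLp_id_gaussianReal 2
  have i2 : Integrable (fun v : ℝ => v ^ 2 * gaussianPDFReal u s v) := by
    have h := hL2.integrable_sq
    rw [gaussianReal_of_var_ne_zero u hs,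
      integrable_withDensity_iff_integrable_smul' (measurable_gaussianPDF u s)
        (Filter.Eventually.of_forall fun _ => gaussianPDF_lt_top)] at h
    simpa [toReal_gaussianPDF, mul_comm] using h
  have e1 : (∫ v, v * gaussianPDFReal u s v) = u := by
    have h := integral_id_gaussianReal (μ := u) (v := s)
    rw [integral_gaussianReal_eq_integral_smul hs] at h
    simpa [mul_comm] using h
  have e2 : (∫ v, v ^ 2 * gaussianPDFReal u s v) = u ^ 2 + R * T := by
    have h := variance_id_gaussianReal (μ := u) (v := s)
    rw [variance_eq_sub hL2] at h
    simp only [id, Pi.pow_apply, integral_id_gaussianReal] at h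
    rw [integral_gaussianReal_eq_integral_smul hs, hcoe] at h
    simp only [smul_eq_mul, mul_comm (gaussianPDFReal u s _)] at h
    linarith
  refine ⟨(integrable_gaussianPDFReal u s).const_mul ρ, ?_, ?_, ?_, ?_⟩
  · simpa [mul_left_comm] using i2.const_mul ρ
  · rw [integral_const_mul, integral_gaussianPDFReal_eq_one u hs, mul_one]
  · simp only [mul_left_comm _ ρ]
    rw [integral_const_mul, e1]
  · simp only [mul_left_comm _ ρ]
    rw [integral_const_mul, e2]

/-- An affine combination of `g` and `M[g]` keeps the moments of `g`. No sign is required of the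
weights: the uniqueness argument uses a negative `b`. -/
theorem affine_moments {R : ℝ} (hR : 0 < R) {g : ℝ → ℝ} (h0 : Integrable g)
    (h2 : Integrable (fun v => v ^ 2 * g v)) (hρ : 0 < momDensity g)
    (hT : 0 < momTemperature R g) {a b : ℝ} (hab : a + b = 1) {h : ℝ → ℝ}
    (hh : ∀ v, h v = a * g v + b * maxwellianOf R g v) :
    Integrable h ∧ Integrable (fun v => v ^ 2 * h v) ∧
    momDensity h = momDensity g ∧ momVelocity h = momVelocity g ∧
      momTemperature R h = momTemperature R g := by
  obtain ⟨r1, r2⟩ := raw_moments hR h0 h2 hρ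
  obtain ⟨m0, m2, n0, n1, n2⟩ :=
    maxwellian_moments hR hT (momDensity g) (momVelocity g)
  have h1 := integrable_first_moment h0 h2
  have m1 := integrable_first_moment m0 m2
  change Integrable (maxwellianOf R g) at m0
  change Integrable (fun v => v * maxwellianOf R g v) at m1
  change Integrable (fun v => v ^ 2 * maxwellianOf R g v) at m2
  change (∫ v, maxwellianOf R g v) = _ at n0
  change (∫ v, v * maxwellianOf R g v) = _ at n1
  change (∫ v, v ^ 2 * maxwellianOf R g v) = _ at n2
  have H0 : h = fun v => a * g v + b * maxwellianOf R g v := funext hh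
  have H1 : (fun v => v * h v)
      = fun v => a * (v * g v) + b * (v * maxwellianOf R g v) := by
    ext v
    rw [hh]
    ring
  have H2 : (fun v => v ^ 2 * h v)
      = fun v => a * (v ^ 2 * g v) + b * (v ^ 2 * maxwellianOf R g v) := by
    ext v
    rw [hh]
    ring
  have I0 : Integrable h := by
    rw [H0]
    exact (h0.const_mul a).add (m0.const_mul b)
  have I2 : Integrable (fun v => v ^ 2 * h v) := by
    rw [H2]
    exact (h2.const_mul a).add (m2.const_mul b)
  refine ⟨I0, I2, moments_congr R I0 I2 h0 h2 ?_ ?_ ?_⟩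
  · rw [H0, integral_add (h0.const_mul a) (m0.const_mul b), integral_const_mul,
      integral_const_mul, n0]
    change a * momDensity g + b * momDensity g = momDensity g
    rw [← add_mul, hab, one_mul]
  · rw [H1, integral_add (h1.const_mul a) (m1.const_mul b), integral_const_mul,
      integral_const_mul, n1, r1, ← add_mul, hab, one_mul]
  · rw [H2, integral_add (h2.const_mul a) (m2.const_mul b), integral_const_mul,
      integral_const_mul, n2, r2, ← add_mul, hab, one_mul]

theorem maxwellianOf_congr {R : ℝ} {f g : ℝ → ℝ} (d : momDensity f = momDensity g)
    (u : momVelocity f = momVelocity g) (t : momTemperature R f = momTemperature R g) :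
    maxwellianOf R f = maxwellianOf R g := by
  unfold maxwellianOf
  rw [d, u, t]

/-- The implicit Euler relaxation step `f = f̃ + (Δt/τ)(M[f] − f)` is solved explicitly
by `f = (τ f̃ + Δt M[f̃])/(τ + Δt)`: this `f` has the same moments as `f̃` (so
`M[f] = M[f̃]`), it satisfies the implicit equation, and it is the unique nonnegative
integrable solution with finite second moment, positive density and positive
temperature. -/
theorem implicit_euler_relaxation_step (R τ Δt : ℝ) (hR : 0 < R) (hτ : 0 < τ)
    (hΔt : 0 < Δt) (ftil : ℝ → ℝ)
    (hpos : ∀ v, 0 ≤ ftil v) (hint : Integrable ftil)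
    (hint2 : Integrable (fun v => v ^ 2 * ftil v))
    (hρ : 0 < momDensity ftil) (hT : 0 < momTemperature R ftil) :
    let f : ℝ → ℝ := fun v => (τ * ftil v + Δt * maxwellianOf R ftil v) / (τ + Δt)
    (∀ v, 0 ≤ f v) ∧ Integrable f ∧ Integrable (fun v => v ^ 2 * f v) ∧
    momDensity f = momDensity ftil ∧
    momVelocity f = momVelocity ftil ∧
    momTemperature R f = momTemperature R ftil ∧
    maxwellianOf R f = maxwellianOf R ftil ∧
    (∀ v, f v = ftil v + (Δt / τ) * (maxwellianOf R f v - f v)) ∧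
    (∀ g : ℝ → ℝ, (∀ v, 0 ≤ g v) → Integrable g →
      Integrable (fun v => v ^ 2 * g v) →
      0 < momDensity g → 0 < momTemperature R g →
      (∀ v, g v = ftil v + (Δt / τ) * (maxwellianOf R g v - g v)) → g = f) := by
  intro f
  have hs : 0 < τ + Δt := by positivity
  have hf : ∀ v, f v = τ / (τ + Δt) * ftil v + Δt / (τ + Δt) * maxwellianOf R ftil v := by
    intro v
    simp only [f]
    ring
  obtain ⟨I0, I2, d, u, t⟩ := affine_moments hR hint hint2 hρ hT
    (a := τ / (τ + Δt)) (b := Δt / (τ + Δt)) (by field_simp) hf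
  have hM := maxwellianOf_congr d u t
  refine ⟨?_, I0, I2, d, u, t, hM, ?_, ?_⟩
  · intro v
    have h1 := hpos v
    have h2 : 0 ≤ maxwellianOf R ftil v := by
      unfold maxwellianOf maxwellian
      positivity
    simp only [f]
    positivity
  · intro v
    rw [hM]
    simp only [f]
    field_simp
    ring
  · intro g _ g0 g2 gρ gT hg
    -- The implicit equation solved for `f̃`.
    have hft : ∀ v, ftil v = (τ + Δt) / τ * g v + -(Δt / τ) * maxwellianOf R g v := by
      intro v
      have h : (τ + Δt) / τ = 1 + Δt / τ := by field_simp
      rw [h]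
      linarith [hg v]
    obtain ⟨-, -, gd, gu, gt⟩ := affine_moments hR g0 g2 gρ gT
      (a := (τ + Δt) / τ) (b := -(Δt / τ)) (by field_simp; ring) hft
    have hMg := maxwellianOf_congr gd gu gt
    ext v
    simp only [f]
    rw [hMg, hft v]
    field_simp
    ring
end

section
/- Fix Δx > 0, a uniform grid x_k = x₀ + kΔx, and data f_{i−1}, f_i, f_{i+1}. Let P be the unique polynomial of degree ≤ 2 with P(x_k) = f_k for k = i−1, i, i+1. Then the smoothness indicator β₁ = ∫_{x_i}^{x_{i+1}} Δx (P'(ξ))² dξ + ∫_{x_i}^{x_{i+1}} Δx³ (P''(ξ))² dξ has the closed form β₁ = (13/12)(f_{i−1} − 2f_i + f_{i+1})² + (f_{i+1} − f_i)²; in particular β₁ ≥ 0 and β₁ = 0 when the data are constant. -/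
/-!
A polynomial of degree at most two is `a X² + b X + c`, so `P' = 2 a ξ + b` and `P'' = 2 a`, and
both integrals are elementary. The data are the values of this quadratic at the three nodes, so
after substituting them the closed form is a polynomial identity in `a, b, c, Δx, x0, i`.
Nonnegativity and vanishing on constant data are read off the closed form.
-/

open intervalIntegral
open Polynomial

lemma integral_sq_affine (a b u v : ℝ) :
    ∫ ξ in u..v, (2 * a * ξ + b) ^ 2 =
      (4 / 3 * a ^ 2 * v ^ 3 + 2 * a * b * v ^ 2 + b ^ 2 * v)
        - (4 / 3 * a ^ 2 * u ^ 3 + 2 * a * b * u ^ 2 + b ^ 2 * u) := by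
  refine integral_eq_sub_of_hasDerivAt
    (f := fun ξ => 4 / 3 * a ^ 2 * ξ ^ 3 + 2 * a * b * ξ ^ 2 + b ^ 2 * ξ) (fun ξ _ => ?_)
    (Continuous.intervalIntegrable (by fun_prop) u v)
  have h := (((hasDerivAt_pow 3 ξ).const_mul (4 / 3 * a ^ 2)).add
    ((hasDerivAt_pow 2 ξ).const_mul (2 * a * b))).add ((hasDerivAt_id ξ).const_mul (b ^ 2))
  refine h.congr_deriv ?_
  push_cast
  ring

/-- Closed form of the smoothness indicator
`β₁ = ∫_{x_i}^{x_{i+1}} Δx (P')² dξ + ∫_{x_i}^{x_{i+1}} Δx³ (P'')² dξ`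
for the quadratic interpolant `P` of the data `f_{i−1}, f_i, f_{i+1}` on the uniform
grid `x_k = x₀ + kΔx`:
`β₁ = (13/12)(f_{i−1} − 2f_i + f_{i+1})² + (f_{i+1} − f_i)²`;
in particular `β₁ ≥ 0`, and `β₁ = 0` when the data are constant. -/
theorem weno_smoothness_indicator_closed_form (Δx x0 : ℝ) (hΔx : 0 < Δx) (i : ℤ)
    (f : ℤ → ℝ) (P : Polynomial ℝ) (hPdeg : P.degree ≤ 2)
    (hP : ∀ k : ℤ, i - 1 ≤ k → k ≤ i + 1 → P.eval (x0 + (k : ℝ) * Δx) = f k) :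
    let β : ℝ :=
      (∫ ξ in (x0 + (i : ℝ) * Δx)..(x0 + ((i : ℝ) + 1) * Δx),
        Δx * ((Polynomial.derivative P).eval ξ) ^ 2)
      + (∫ ξ in (x0 + (i : ℝ) * Δx)..(x0 + ((i : ℝ) + 1) * Δx),
        Δx ^ 3 * ((Polynomial.derivative (Polynomial.derivative P)).eval ξ) ^ 2)
    β = (13 / 12) * (f (i - 1) - 2 * f i + f (i + 1)) ^ 2 + (f (i + 1) - f i) ^ 2 ∧
    0 ≤ β ∧
    (f (i - 1) = f i ∧ f i = f (i + 1) → β = 0) := by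
  obtain ⟨a, b, c, rfl⟩ : ∃ a b c : ℝ, P = C a * X ^ 2 + C b * X + C c :=
    ⟨_, _, _, eq_quadratic_of_degree_le_two hPdeg⟩
  have h0 := hP (i - 1) le_rfl (by lia)
  have h1 := hP i (by lia) (by lia)
  have h2 := hP (i + 1) (by lia) le_rfl
  simp only [eval_add, eval_mul, eval_pow, eval_C, eval_X] at h0 h1 h2
  push_cast at h0 h1 h2
  intro β
  have key : β = (13 / 12) * (f (i - 1) - 2 * f i + f (i + 1)) ^ 2 + (f (i + 1) - f i) ^ 2 := by
    have hd : ∀ ξ : ℝ, (derivative (C a * X ^ 2 + C b * X + C c)).eval ξ = 2 * a * ξ + b := by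
      intro ξ
      simp
      ring
    have hdd : ∀ ξ : ℝ,
        (derivative (derivative (C a * X ^ 2 + C b * X + C c))).eval ξ = 2 * a := by
      intro ξ
      simp
      ring
    simp only [β, hd, hdd, integral_const_mul, integral_sq_affine, integral_const, smul_eq_mul]
    rw [← h0, ← h1, ← h2]
    ring
  refine ⟨key, ?_, ?_⟩
  · rw [key]
    positivity
  · rintro ⟨e1, e2⟩
    rw [key, e1, e2]
    ring
end
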